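/- In the free associative algebra k⟨E₁, E₂⟩, the element R₇ = [E₁,[E₁,[E₁,[E₁,[E₁,E₂]]]]] + 40[E₂,[E₂,[E₂,E₁]]] does not lie in the two-sided ideal generated by the element R₅ = [E₁,[E₁,[E₁,E₂]]] + 6[E₂,[E₂,E₁]] (here [a,b] = ab − ba denotes the ring commutator). -/

import Mathlib

set_option maxHeartbeats 1000000

/-!
Statement 4: In the free associative algebra k⟨E₁,E₂⟩, the element
R₇ = [E₁,[E₁,[E₁,[E₁,[E₁,E₂]]]]] + 40[E₂,[E₂,[E₂,E₁]]] does not lie in the two-sided ideal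
generated by R₅ = [E₁,[E₁,[E₁,E₂]]] + 6[E₂,[E₂,E₁]], where [a,b] = ab − ba.
-/

noncomputable section

/-- The ring commutator [a, b] = ab - ba. -/
def cm {A : Type*} [Ring A] (a b : A) : A := a * b - b * a

/-- The generator E₁ of the free algebra on two generators. -/
def E₁ (k : Type*) [Field k] : FreeAlgebra k (Fin 2) := FreeAlgebra.ι k 0

/-- The generator E₂ of the free algebra on two generators. -/
def E₂ (k : Type*) [Field k] : FreeAlgebra k (Fin 2) := FreeAlgebra.ι k 1

/-- The degree 5 relation R₅. -/
def R₅ (k : Type*) [Field k] : FreeAlgebra k (Fin 2) :=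
  cm (E₁ k) (cm (E₁ k) (cm (E₁ k) (E₂ k))) + 6 * cm (E₂ k) (cm (E₂ k) (E₁ k))

/-- The degree 7 relation R₇. -/
def R₇ (k : Type*) [Field k] : FreeAlgebra k (Fin 2) :=
  cm (E₁ k) (cm (E₁ k) (cm (E₁ k) (cm (E₁ k) (cm (E₁ k) (E₂ k))))) +
    40 * cm (E₂ k) (cm (E₂ k) (cm (E₂ k) (E₁ k)))

/-- The representation by upper triangular `2 × 2` matrices, `E₁ ↦ !![6, 0; 0, 0]` and
`E₂ ↦ !![6, 1; 0, 0]`; it kills `R₅` but not `R₇`. -/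
def triangularRep (k : Type*) [Field k] :
    FreeAlgebra k (Fin 2) →ₐ[k] Matrix (Fin 2) (Fin 2) k :=
  FreeAlgebra.lift k ![!![6, 0; 0, 0], !![6, 1; 0, 0]]

theorem triangularRep_E₁ (k : Type*) [Field k] :
    triangularRep k (E₁ k) = !![6, 0; 0, 0] := by
  simp [triangularRep, E₁]

theorem triangularRep_E₂ (k : Type*) [Field k] :
    triangularRep k (E₂ k) = !![6, 1; 0, 0] := by
  simp [triangularRep, E₂]

theorem map_cm {A B F : Type*} [Ring A] [Ring B] [FunLike F A B] [RingHomClass F A B]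
    (f : F) (a b : A) : f (cm a b) = cm (f a) (f b) := by
  simp [cm]

theorem triangularRep_R₅ (k : Type*) [Field k] : triangularRep k (R₅ k) = 0 := by
  simp only [R₅, map_add, map_mul, map_ofNat, map_cm, triangularRep_E₁, triangularRep_E₂,
    ← nsmul_eq_mul, ← Nat.cast_ofNat (R := Matrix (Fin 2) (Fin 2) k)]
  ext i j
  fin_cases i <;> fin_cases j <;> simp [cm]

theorem triangularRep_R₇ (k : Type*) [Field k] :
    triangularRep k (R₇ k) = !![0, -864; 0, 0] := by
  simp only [R₇, map_add, map_mul, map_ofNat, map_cm, triangularRep_E₁, triangularRep_E₂,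
    ← nsmul_eq_mul, ← Nat.cast_ofNat (R := Matrix (Fin 2) (Fin 2) k)]
  ext i j
  fin_cases i <;> fin_cases j <;> simp [cm]
  norm_num

theorem R7_not_mem_twoSidedIdeal_span_R5 (k : Type*) [Field k] [CharZero k] :
    R₇ k ∉ TwoSidedIdeal.span {R₅ k} := by
  intro h
  have hker : R₇ k ∈ TwoSidedIdeal.ker (triangularRep k) := by
    refine TwoSidedIdeal.mem_span_iff.mp h _ ?_
    simpa [TwoSidedIdeal.mem_ker] using triangularRep_R₅ k
  rw [TwoSidedIdeal.mem_ker, triangularRep_R₇] at hker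
  simpa using congrFun (congrFun hker 0) 1

end
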